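/- The Jeffrey-divergence Gaussian kernel is not positive definite: for the symmetric positive definite 2×2 matrices X₁ = [[72,1],[1,88]], X₂ = [[123,−10],[−10,66]], X₃ = [[51,5],[5,109]], the 3×3 matrix K with entries K_{ij} = exp(−(1/4) δ_J²(Xᵢ, Xⱼ)) is not positive semidefinite (it has a negative eigenvalue); in particular there exists a real vector c ∈ ℝ³ with cᵀKc < 0. -/

import Mathlib

open Matrix

/-- The Jeffrey divergence `δ_J²(X,Y) = (1/2)Tr(X⁻¹Y) + (1/2)Tr(Y⁻¹X) − n` (here n = 2). -/
noncomputable def jeffreyDiv (X Y : Matrix (Fin 2) (Fin 2) ℝ) : ℝ :=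
  (1 / 2) * (X⁻¹ * Y).trace + (1 / 2) * (Y⁻¹ * X).trace - 2

/-- The three symmetric positive definite `2 × 2` counterexample matrices. -/
noncomputable def counterMatrices : Fin 3 → Matrix (Fin 2) (Fin 2) ℝ
  | 0 => !![72, 1; 1, 88]
  | 1 => !![123, -10; -10, 66]
  | 2 => !![51, 5; 5, 109]

theorem posDef_two {a b c : ℝ} (ha : 0 < a) (hd : 0 < a * c - b * b) :
    (!![a, b; b, c] : Matrix (Fin 2) (Fin 2) ℝ).PosDef := by
  refine Matrix.PosDef.of_dotProduct_mulVec_pos ?_ ?_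
  · ext i j
    fin_cases i <;> fin_cases j <;> simp
  · intro x hx
    have h : star x ⬝ᵥ (!![a, b; b, c] *ᵥ x)
        = a * x 0 ^ 2 + 2 * b * x 0 * x 1 + c * x 1 ^ 2 := by
      simp [Matrix.mulVec, dotProduct, Fin.sum_univ_two]
      ring
    rw [h]
    have h2 : 0 < a * (a * x 0 ^ 2 + 2 * b * x 0 * x 1 + c * x 1 ^ 2) := by
      have e : a * (a * x 0 ^ 2 + 2 * b * x 0 * x 1 + c * x 1 ^ 2)
          = (a * x 0 + b * x 1) ^ 2 + (a * c - b * b) * x 1 ^ 2 := by ring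
      rw [e]
      by_cases h1 : x 1 = 0
      · have h0 : x 0 ≠ 0 := by
          intro h0
          apply hx
          ext i
          fin_cases i <;> simp [h0, h1]
        rw [h1]
        have : 0 < (a * x 0) ^ 2 := by positivity
        simpa using this
      · have : 0 < (a * c - b * b) * x 1 ^ 2 := by positivity
        nlinarith [sq_nonneg (a * x 0 + b * x 1)]
    exact pos_of_mul_pos_right h2 ha.le

theorem jeffreyDiv_two (a b c d e f : ℝ) (h1 : a * c - b * b ≠ 0) (h2 : d * f - e * e ≠ 0) :
    jeffreyDiv !![a, b; b, c] !![d, e; e, f]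
      = (c * d - 2 * b * e + a * f) * (1 / (a * c - b * b) + 1 / (d * f - e * e)) / 2 - 2 := by
  simp only [jeffreyDiv, Matrix.inv_def, Matrix.det_fin_two_of, Matrix.adjugate_fin_two_of,
    Ring.inverse_eq_inv', Matrix.trace_fin_two]
  simp [Matrix.mul_apply, Fin.sum_univ_two]
  field_simp
  ring

theorem exp_lower_a : (0.95038 : ℝ) ≤ Real.exp (-0.05088) := by
  have h := Real.exp_bound (x := -0.05088) (by norm_num [abs_le]) (n := 5) (by norm_num)
  rw [abs_le] at h
  norm_num [Finset.sum_range_succ, Nat.factorial] at h ⊢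
  linarith [h.1]

theorem exp_lower_b : (0.9786 : ℝ) ≤ Real.exp (-0.02163) := by
  have h := Real.exp_bound (x := -0.02163) (by norm_num [abs_le]) (n := 5) (by norm_num)
  rw [abs_le] at h
  norm_num [Finset.sum_range_succ, Nat.factorial] at h ⊢
  linarith [h.1]

theorem exp_upper_c : Real.exp (-0.14417) ≤ (0.86575 : ℝ) := by
  have h := Real.exp_bound (x := -0.14417) (by norm_num [abs_le]) (n := 5) (by norm_num)
  rw [abs_le] at h
  norm_num [Finset.sum_range_succ, Nat.factorial] at h ⊢
  linarith [h.2]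

/-- The Jeffrey-divergence Gaussian kernel with `β = 1/4` is not positive definite: the
`3 × 3` matrix `K` with `K_{ij} = exp(−(1/4) δ_J²(Xᵢ, Xⱼ))` built from the matrices
`X₁ = [[72,1],[1,88]]`, `X₂ = [[123,−10],[−10,66]]`, `X₃ = [[51,5],[5,109]]` is not
positive semidefinite; in particular there exists `c ∈ ℝ³` with `cᵀ K c < 0`. -/
theorem jeffrey_kernel_not_posSemidef :
    (∀ i, (counterMatrices i).PosDef) ∧
    ¬ (Matrix.of fun i j : Fin 3 =>
        Real.exp (-(1 / 4) * jeffreyDiv (counterMatrices i) (counterMatrices j))).PosSemidef ∧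
    ∃ c : Fin 3 → ℝ,
      c ⬝ᵥ (Matrix.of fun i j : Fin 3 =>
        Real.exp (-(1 / 4) * jeffreyDiv (counterMatrices i) (counterMatrices j))) *ᵥ c < 0 := by
  have key : ∃ c : Fin 3 → ℝ,
      c ⬝ᵥ (Matrix.of fun i j : Fin 3 =>
        Real.exp (-(1 / 4) * jeffreyDiv (counterMatrices i) (counterMatrices j))) *ᵥ c < 0 := by
    refine ⟨![1, -0.412, -0.622], ?_⟩
    have ha := exp_lower_a.trans (Real.exp_le_exp.2
      (show (-0.05088 : ℝ) ≤ -(1 / 4) * (738331 / 3628145) by norm_num))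
    have hb := exp_lower_b.trans (Real.exp_le_exp.2
      (show (-0.02163 : ℝ) ≤ -(1 / 4) * (3032867 / 35057890) by norm_num))
    have hc := (Real.exp_le_exp.2
      (show -(1 / 4) * (6397056 / 11092903) ≤ (-0.14417 : ℝ) by norm_num)).trans exp_upper_c
    have d00 : jeffreyDiv (counterMatrices 0) (counterMatrices 0) = 0 := by
      simp only [counterMatrices]
      rw [jeffreyDiv_two] <;> norm_num
    have d11 : jeffreyDiv (counterMatrices 1) (counterMatrices 1) = 0 := by
      simp only [counterMatrices]
      rw [jeffreyDiv_two] <;> norm_num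
    have d22 : jeffreyDiv (counterMatrices 2) (counterMatrices 2) = 0 := by
      simp only [counterMatrices]
      rw [jeffreyDiv_two] <;> norm_num
    have d01 : jeffreyDiv (counterMatrices 0) (counterMatrices 1) = 738331 / 3628145 := by
      simp only [counterMatrices]
      rw [jeffreyDiv_two] <;> norm_num
    have d02 : jeffreyDiv (counterMatrices 0) (counterMatrices 2) = 3032867 / 35057890 := by
      simp only [counterMatrices]
      rw [jeffreyDiv_two] <;> norm_num
    have d12 : jeffreyDiv (counterMatrices 1) (counterMatrices 2) = 6397056 / 11092903 := by
      simp only [counterMatrices]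
      rw [jeffreyDiv_two] <;> norm_num
    have sy : ∀ X Y, jeffreyDiv X Y = jeffreyDiv Y X := by
      intro X Y
      unfold jeffreyDiv
      ring
    have d10 := (sy (counterMatrices 1) (counterMatrices 0)).trans d01
    have d20 := (sy (counterMatrices 2) (counterMatrices 0)).trans d02
    have d21 := (sy (counterMatrices 2) (counterMatrices 1)).trans d12
    simp only [Matrix.mulVec, dotProduct, Fin.sum_univ_three, Matrix.of_apply, d00, d01, d02,
      d10, d11, d12, d20, d21, d22, mul_zero, Real.exp_zero]
    simp only [Matrix.cons_val]
    linarith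
  refine ⟨?_, ?_, key⟩
  · intro i
    fin_cases i <;> simp only [counterMatrices] <;> apply posDef_two <;> norm_num
  · intro h
    obtain ⟨c, hc⟩ := key
    have := h.dotProduct_mulVec_nonneg c
    rw [star_trivial] at this
    exact absurd hc (not_lt.2 this)
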